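/- arXiv:2310.12728 — 2 statements merged into one kernel-verified Lean document; each statement's English description precedes it below -/
import Mathlib

section
/- Let G be a finite group and k a field whose characteristic does not divide |G|. Let e = Σ_{g ∈ G} μ_g·g be a subcentral idempotent of the group Hopf algebra kG, let K be the subgroup of G generated by the support J = {g ∈ G : μ_g ≠ 0}, and let I := span_k{h·e : h ∈ K} ⊆ kG. For any fixed g₀ ∈ G, consider the k-linear map ρ_{g₀} : I → I ⊗ kG defined by ρ_{g₀}(x) = x_{(1)}·e ⊗ g₀·x_{(2)}. Then the partial comodule (I, ρ_{g₀}) is simple: if M is a k-subspace of I such that ρ_{g₀}(M) ⊆ M ⊗ kG (i.e. ρ_{g₀}(x) lies in the image of M ⊗ kG in I ⊗ kG for every x ∈ M), then M = 0 or M = I. -/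
open TensorProduct

/-- The comultiplication of the group Hopf algebra `kG`, determined by `Δ(g) = g ⊗ g`. -/
noncomputable def gaComul (k G : Type*) [Field k] [Group G] :
    MonoidAlgebra k G →ₗ[k] MonoidAlgebra k G ⊗[k] MonoidAlgebra k G :=
  (Finsupp.lsum k fun g => LinearMap.toSpanSingleton k _
    (MonoidAlgebra.of k G g ⊗ₜ[k] MonoidAlgebra.of k G g)) ∘ₗ
    (MonoidAlgebra.coeffLinearEquiv k).toLinearMap

/-- The counit of the group Hopf algebra `kG`, determined by `ε(g) = 1`. -/
noncomputable def gaCounit (k G : Type*) [Field k] [Group G] :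
    MonoidAlgebra k G →ₗ[k] k :=
  (Finsupp.lsum k fun _ => LinearMap.id) ∘ₗ (MonoidAlgebra.coeffLinearEquiv k).toLinearMap

/-- The antipode of the group Hopf algebra `kG`, determined by `S(g) = g⁻¹`. -/
noncomputable def gaAntipode (k G : Type*) [Field k] [Group G] :
    MonoidAlgebra k G →ₗ[k] MonoidAlgebra k G :=
  MonoidAlgebra.mapDomainLinearMap k k (fun g : G => g⁻¹)

theorem gaComul_single (k G : Type*) [Field k] [Group G] (g : G) (a : k) :
    gaComul k G (MonoidAlgebra.single g a) =
      a • (MonoidAlgebra.of k G g ⊗ₜ[k] MonoidAlgebra.of k G g) := by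
  have hcoeff : MonoidAlgebra.coeffLinearEquiv k (MonoidAlgebra.single g a) =
      Finsupp.single g a := rfl
  simp [gaComul, hcoeff]

/-- Contraction of the second tensor factor of `kG ⊗ kG` with the coefficient functional at `g`. -/
noncomputable def gaSlice (k : Type*) {G : Type*} [Field k] [Group G] (g : G) :
    MonoidAlgebra k G ⊗[k] MonoidAlgebra k G →ₗ[k] MonoidAlgebra k G :=
  (TensorProduct.rid k (MonoidAlgebra k G)).toLinearMap ∘ₗ
    LinearMap.lTensor _ (Finsupp.lapply g ∘ₗ (MonoidAlgebra.coeffLinearEquiv k).toLinearMap)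

theorem gaSlice_tmul {k G : Type*} [Field k] [Group G] (g : G) (x y : MonoidAlgebra k G) :
    gaSlice k g (x ⊗ₜ[k] y) = y.coeff g • x := by
  have hcoeff : MonoidAlgebra.coeffLinearEquiv k y = y.coeff := rfl
  simp [gaSlice, hcoeff]

theorem gaSlice_coaction {k G : Type*} [Field k] [Group G] (e x : MonoidAlgebra k G) (g₀ g : G) :
    gaSlice k (g₀ * g) (((1 : MonoidAlgebra k G) ⊗ₜ[k] MonoidAlgebra.of k G g₀)
        * (gaComul k G x * (e ⊗ₜ[k] (1 : MonoidAlgebra k G)))) =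
      x.coeff g • (MonoidAlgebra.of k G g * e) := by
  classical
  induction x using MonoidAlgebra.induction_linear with
  | zero => simp
  | add x y hx hy => simp only [map_add, add_mul, mul_add, hx, hy, MonoidAlgebra.coeff_add,
      Finsupp.add_apply, add_smul]
  | single h a =>
    rw [gaComul_single, smul_mul_assoc, mul_smul_comm, map_smul,
      Algebra.TensorProduct.tmul_mul_tmul, Algebra.TensorProduct.tmul_mul_tmul, gaSlice_tmul,
      one_mul, mul_one, ← map_mul, MonoidAlgebra.of_apply, MonoidAlgebra.coeff_single,
      MonoidAlgebra.coeff_single, Finsupp.single_apply, Finsupp.single_apply]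
    by_cases hg : h = g
    · simp [hg]
    · simp [hg]

/-- A subspace stable under the partial coaction contains `g * e` for every `g` in the support of
one of its elements. -/
theorem of_mul_mem_of_coaction_stable {k G : Type*} [Field k] [Group G] {e : MonoidAlgebra k G}
    {g₀ : G} {M : Submodule k (MonoidAlgebra k G)}
    (hM : ∀ x ∈ M,
      ((1 : MonoidAlgebra k G) ⊗ₜ[k] MonoidAlgebra.of k G g₀)
          * (gaComul k G x * (e ⊗ₜ[k] (1 : MonoidAlgebra k G)))
        ∈ Submodule.span k {z : MonoidAlgebra k G ⊗[k] MonoidAlgebra k G |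
            ∃ m ∈ M, ∃ h : MonoidAlgebra k G, z = m ⊗ₜ[k] h})
    {x : MonoidAlgebra k G} (hx : x ∈ M) {g : G} (hg : x.coeff g ≠ 0) :
    MonoidAlgebra.of k G g * e ∈ M := by
  have hslice : Submodule.span k {z : MonoidAlgebra k G ⊗[k] MonoidAlgebra k G |
      ∃ m ∈ M, ∃ h : MonoidAlgebra k G, z = m ⊗ₜ[k] h} ≤ M.comap (gaSlice k (g₀ * g)) := by
    rw [Submodule.span_le]
    rintro _ ⟨m, hm, h, rfl⟩
    simpa only [SetLike.mem_coe, Submodule.mem_comap, gaSlice_tmul] using M.smul_mem _ hm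
  have hmem := hslice (hM x hx)
  rw [Submodule.mem_comap, gaSlice_coaction] at hmem
  exact (M.smul_mem_iff hg).1 hmem

/-- let `G` be a finite group, `k` a field with `char k ∤ |G|`, `e` a
subcentral idempotent of `kG`, `K` the subgroup generated by the support of `e`, and
`I := span_k{h·e : h ∈ K}`. For `g₀ ∈ G`, the partial coaction
`ρ_{g₀}(x) = x₍₁₎·e ⊗ g₀·x₍₂₎` makes `I` a simple partial comodule: every subspace
`M ⊆ I` with `ρ_{g₀}(M) ⊆ M ⊗ kG` is `0` or `I`. -/
theorem stmt17 (k G : Type*) [Field k] [Group G] [Fintype G]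
    (hchar : (Fintype.card G : k) ≠ 0)
    (e : MonoidAlgebra k G) (he0 : e ≠ 0) (hidem : e * e = e)
    (hsub : (e ⊗ₜ[k] (1 : MonoidAlgebra k G)) * gaComul k G e
      = gaComul k G e * (e ⊗ₜ[k] (1 : MonoidAlgebra k G)))
    (K : Subgroup G) (hK : K = Subgroup.closure (e.coeff.support : Set G))
    (I : Submodule k (MonoidAlgebra k G))
    (hI : I = Submodule.span k
      {x : MonoidAlgebra k G | ∃ h ∈ K, x = MonoidAlgebra.of k G h * e})
    (g₀ : G)
    (M : Submodule k (MonoidAlgebra k G)) (hMI : M ≤ I)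
    (hM : ∀ x ∈ M,
      ((1 : MonoidAlgebra k G) ⊗ₜ[k] MonoidAlgebra.of k G g₀)
          * (gaComul k G x * (e ⊗ₜ[k] (1 : MonoidAlgebra k G)))
        ∈ Submodule.span k {z : MonoidAlgebra k G ⊗[k] MonoidAlgebra k G |
            ∃ m ∈ M, ∃ h : MonoidAlgebra k G, z = m ⊗ₜ[k] h}) :
    M = ⊥ ∨ M = I := by
  subst hK hI
  rw [or_iff_not_imp_left]
  intro hM0
  refine le_antisymm hMI ?_
  obtain ⟨x, hxM, hx0⟩ := M.exists_mem_ne_zero_of_ne_bot hM0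
  have hsupp : ∀ g, x.coeff g ≠ 0 → g ∈ Subgroup.closure (e.coeff.support : Set G) := by
    have hspan : Submodule.span k {x : MonoidAlgebra k G |
        ∃ h ∈ Subgroup.closure (e.coeff.support : Set G), x = MonoidAlgebra.of k G h * e} ≤
        MonoidAlgebra.supported k k (Subgroup.closure (e.coeff.support : Set G) : Set G) := by
      rw [Submodule.span_le]
      rintro _ ⟨h, hh, rfl⟩ g hg
      have hg' : e.coeff (h⁻¹ * g) ≠ 0 := by simpa using hg
      have hmem : h⁻¹ * g ∈ Subgroup.closure (e.coeff.support : Set G) :=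
        Subgroup.subset_closure (by simpa using hg')
      exact (Subgroup.mul_mem_cancel_left _ (inv_mem hh)).1 hmem
    intro g hg
    exact hspan (hMI hxM) (by simpa using hg)
  obtain ⟨h, hh⟩ : ∃ h, x.coeff h ≠ 0 := by
    by_contra! hzero
    exact hx0 (by ext g; simpa using hzero g)
  have horbit : ∀ g ∈ Submonoid.closure (e.coeff.support : Set G),
      MonoidAlgebra.of k G (h * g) * e ∈ M := by
    intro g hg
    induction hg using Submonoid.closure_induction_right with
    | one => simpa only [mul_one] using of_mul_mem_of_coaction_stable hM hxM hh
    | mul_right a _ b hb ih =>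
      refine of_mul_mem_of_coaction_stable hM ih ?_
      simpa [mul_assoc] using hb
  rw [Submodule.span_le]
  rintro _ ⟨g, hg, rfl⟩
  have hmem : h⁻¹ * g ∈ Subgroup.closure (e.coeff.support : Set G) :=
    mul_mem (inv_mem (hsupp h hh)) hg
  rw [← Subgroup.mem_toSubmonoid, Subgroup.closure_toSubmonoid_of_finite] at hmem
  simpa only [SetLike.mem_coe, mul_inv_cancel_left] using horbit _ hmem
end

section
/- Let G be a finite group and k a field whose characteristic does not divide |G|. Let e = Σ_{g} μ_g·g and e' = Σ_{g} μ'_g·g be subcentral idempotents of kG, let K (resp. K') be the subgroup of G generated by {g : μ_g ≠ 0} (resp. {g : μ'_g ≠ 0}), and set I := span_k{h·e : h ∈ K}, I' := span_k{h·e' : h ∈ K'}. Fix g, g' ∈ G and define the partial coactions ρ : I → I ⊗ kG, ρ(x) = x_{(1)}·e ⊗ g·x_{(2)}, and ρ' : I' → I' ⊗ kG, ρ'(x) = x_{(1)}·e' ⊗ g'·x_{(2)}. Then there exists a k-linear bijection f : I → I' with (f ⊗ id)(ρ(x)) = ρ'(f(x)) for all x ∈ I (an isomorphism of partial kG-comodules)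 if and only if K = K', g·K = g'·K, and there exists a group homomorphism ν : K → kˣ such that the algebra automorphism of kK sending h ↦ ν(h)·h maps e to e' (i.e. Σ_h ν(h)·μ_h·h = e'). -/
open TensorProduct

namespace MonoidAlgebra

variable {k G : Type*} [Field k] [Group G]

lemma of_mul_ne_zero {e : MonoidAlgebra k G} (he : e ≠ 0) (h : G) : of k G h * e ≠ 0 := by
  intro H
  have := congrArg (of k G h⁻¹ * ·) H
  rw [mul_zero, ← mul_assoc, ← map_mul, inv_mul_cancel, map_one, one_mul] at this
  exact he this

lemma coeff_of_mul (e : MonoidAlgebra k G) (h u : G) :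
    (of k G h * e).coeff u = e.coeff (h⁻¹ * u) := by
  simp [of_apply]

/-- The span of the translates `h * e` for `h` in the subgroup `K`. -/
noncomputable def translateSpan (K : Subgroup G) (e : MonoidAlgebra k G) : Submodule k (MonoidAlgebra k G) :=
  Submodule.span k {x | ∃ h ∈ K, x = of k G h * e}

lemma of_mul_mem_translateSpan {K : Subgroup G} (e : MonoidAlgebra k G) {h : G} (hh : h ∈ K) :
    of k G h * e ∈ translateSpan K e :=
  Submodule.subset_span ⟨h, hh, rfl⟩

lemma coeff_eq_zero_of_mem_translateSpan {K : Subgroup G} {e x : MonoidAlgebra k G}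
    (he : ∀ h ∉ K, e.coeff h = 0) (hx : x ∈ translateSpan K e) {h : G} (hh : h ∉ K) :
    x.coeff h = 0 := by
  induction hx using Submodule.span_induction with
  | mem x hx =>
    obtain ⟨u, hu, rfl⟩ := hx
    rw [coeff_of_mul]
    exact he _ fun H => hh ((K.mul_mem_cancel_left (K.inv_mem hu)).1 H)
  | zero => simp
  | add x y _ _ hx hy => simp [hx, hy]
  | smul a x _ hx => simp [hx]

lemma exists_mem_translateSpan_coeff_ne_zero {K : Subgroup G} {e : MonoidAlgebra k G}
    (he0 : e ≠ 0) (he : ∀ h ∉ K, e.coeff h = 0) {h : G} (hh : h ∈ K) :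
    ∃ x ∈ translateSpan K e, x.coeff h ≠ 0 := by
  obtain ⟨m, hm⟩ : ∃ m, e.coeff m ≠ 0 := by
    by_contra! H
    exact he0 (MonoidAlgebra.ext (Finsupp.ext H))
  have hmK : m ∈ K := by
    by_contra H
    exact hm (he m H)
  refine ⟨_, of_mul_mem_translateSpan e (K.mul_mem hh (K.inv_mem hmK)), ?_⟩
  simpa [coeff_of_mul] using hm

lemma gaComul_eq_sum [Fintype G] (x : MonoidAlgebra k G) :
    gaComul k G x = ∑ h, x.coeff h • (of k G h ⊗ₜ[k] of k G h) := by
  change x.coeff.sum (fun h a => a • (of k G h ⊗ₜ[k] of k G h)) = _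
  exact Finsupp.sum_fintype _ _ (by simp)

lemma one_tmul_of_mul_gaComul_mul [Fintype G] (e x : MonoidAlgebra k G) (g : G) :
    ((1 : MonoidAlgebra k G) ⊗ₜ[k] of k G g) *
        (gaComul k G x * (e ⊗ₜ[k] (1 : MonoidAlgebra k G)))
      = ∑ h, (x.coeff h • (of k G h * e)) ⊗ₜ[k] of k G (g * h) := by
  simp only [gaComul_eq_sum, Finset.sum_mul, Finset.mul_sum, smul_mul_assoc, mul_smul_comm,
    Algebra.TensorProduct.tmul_mul_tmul, one_mul, mul_one, map_mul, TensorProduct.smul_tmul']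

lemma sum_tmul_of_injective [Fintype G] {M : Type*} [AddCommGroup M] [Module k M] (g : G)
    {a b : G → M}
    (H : ∑ h, a h ⊗ₜ[k] of k G (g * h) = ∑ h, b h ⊗ₜ[k] of k G (g * h)) (h : G) :
    a h = b h := by
  classical
  have := congrArg ((TensorProduct.rid k M).toLinearMap ∘ₗ TensorProduct.map LinearMap.id
    (Finsupp.lapply (g * h) ∘ₗ (coeffLinearEquiv (S := k) (M := G) k).toLinearMap) :) H
  have hc (u : G) : (coeffLinearEquiv (S := k) (M := G) k) (of k G u) = Finsupp.single u 1 := rfl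
  simpa [hc, Finsupp.single_apply, -of_apply, -map_mul] using this

/-- A linear map is compatible with two shifted coactions iff it is so coefficientwise. -/
lemma map_coaction_eq_iff [Fintype G] (f : MonoidAlgebra k G →ₗ[k] MonoidAlgebra k G)
    (e e' x : MonoidAlgebra k G) (g g' : G) :
    TensorProduct.map f LinearMap.id
        (((1 : MonoidAlgebra k G) ⊗ₜ[k] of k G g) *
          (gaComul k G x * (e ⊗ₜ[k] (1 : MonoidAlgebra k G))))
      = ((1 : MonoidAlgebra k G) ⊗ₜ[k] of k G g') *
          (gaComul k G (f x) * (e' ⊗ₜ[k] (1 : MonoidAlgebra k G)))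
    ↔ ∀ h, x.coeff h • f (of k G h * e)
        = (f x).coeff (g'⁻¹ * g * h) • (of k G (g'⁻¹ * g * h) * e') := by
  rw [one_tmul_of_mul_gaComul_mul, one_tmul_of_mul_gaComul_mul,
    ← Equiv.sum_comp (Equiv.mulLeft (g'⁻¹ * g))
      (fun h => ((f x).coeff h • (of k G h * e')) ⊗ₜ[k] of k G (g' * h)), map_sum]
  simp only [TensorProduct.map_tmul, map_smul, LinearMap.id_apply, Equiv.coe_mulLeft]
  have hg (h : G) : g' * (g'⁻¹ * g * h) = g * h := by group
  simp only [hg]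
  exact ⟨sum_tmul_of_injective g, fun H => Finset.sum_congr rfl fun h _ => by rw [H]⟩

/-- The linear endomorphism of `k[G]` sending `h` to `c h • (t * h)`. -/
noncomputable def weightedTranslate [Fintype G] (t : G) (c : G → k) :
    MonoidAlgebra k G →ₗ[k] MonoidAlgebra k G where
  toFun x := ofCoeff (Finsupp.equivFunOnFinite.symm fun u => c (t⁻¹ * u) * x.coeff (t⁻¹ * u))
  map_add' x y := by ext; simp [mul_add]
  map_smul' a x := by ext; simp [mul_left_comm]

lemma coeff_weightedTranslate [Fintype G] (t : G) (c : G → k) (x : MonoidAlgebra k G) (u : G) :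
    (weightedTranslate t c x).coeff u = c (t⁻¹ * u) * x.coeff (t⁻¹ * u) := rfl

/-- Nonzero weights `c` on `K` relating the coefficients of `e` and `e'` on all translates are
multiplicative up to normalization. -/
lemma exists_character_of_weights {K : Subgroup G} {e e' : MonoidAlgebra k G}
    (hK : K = Subgroup.closure (e.coeff.support : Set G)) (c : K → k) (hc0 : ∀ h, c h ≠ 0)
    (hc : ∀ u m : K, c (u * m) * e.coeff m = c u * e'.coeff m) :
    ∃ ν : K →* kˣ, ∀ (h : G) (hh : h ∈ K), e'.coeff h = ((ν ⟨h, hh⟩ : kˣ) : k) * e.coeff h := by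
  have key : ∀ (m : G) (hm : m ∈ K) (u : K), c (u * ⟨m, hm⟩) * c 1 = c u * c ⟨m, hm⟩ := by
    subst hK
    intro m hm
    induction hm using Subgroup.closure_induction with
    | mem m hm =>
      intro u
      have hm0 : e.coeff m ≠ 0 := by simpa using hm
      have h1 := hc u ⟨m, Subgroup.subset_closure hm⟩
      have h2 := hc 1 ⟨m, Subgroup.subset_closure hm⟩
      rw [one_mul] at h2
      apply mul_right_cancel₀ hm0
      linear_combination c 1 * h1 - c u * h2
    | one => intro u; exact congrArg (c · * c 1) (mul_one u)
    | mul x y hx hy ihx ihy =>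
      intro u
      have h1 := ihy (u * ⟨x, hx⟩)
      have h2 := ihy ⟨x, hx⟩
      have h3 := ihx u
      rw [mul_assoc] at h1
      apply mul_right_cancel₀ (hc0 1)
      change c (u * (⟨x, hx⟩ * ⟨y, hy⟩)) * c 1 * c 1 = c u * c (⟨x, hx⟩ * ⟨y, hy⟩) * c 1
      linear_combination c 1 * h1 - c u * h2 + c ⟨y, hy⟩ * h3
    | inv x hx ihx =>
      intro u
      have h1 := ihx (u * ⟨x, hx⟩⁻¹)
      have h2 := ihx ⟨x, hx⟩⁻¹
      rw [inv_mul_cancel_right] at h1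
      rw [inv_mul_cancel] at h2
      apply mul_right_cancel₀ (hc0 ⟨x, hx⟩)
      change c (u * ⟨x, hx⟩⁻¹) * c 1 * c ⟨x, hx⟩ = c u * c (⟨x, hx⟩⁻¹) * c ⟨x, hx⟩
      linear_combination c u * h2 - c 1 * h1
  refine ⟨MonoidHom.mk' (fun h => Units.mk0 (c h / c 1) (div_ne_zero (hc0 h) (hc0 1))) ?_, ?_⟩
  · intro a b
    ext
    have := key b b.2 a
    have h1 := hc0 1
    simp only [Units.val_mk0, Units.val_mul]
    field_simp
    exact this
  · intro h hh
    have := hc 1 ⟨h, hh⟩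
    have h1 := hc0 1
    rw [one_mul] at this
    simp only [MonoidHom.mk'_apply, Units.val_mk0]
    field_simp
    linear_combination -this

section Classification

variable {K K' : Subgroup G} {e e' : MonoidAlgebra k G}

/-- The coefficientwise description of an isomorphism of partial comodules, where `t = g'⁻¹ * g`. -/
structure IsColinearIso (f : MonoidAlgebra k G →ₗ[k] MonoidAlgebra k G) (K K' : Subgroup G)
    (e e' : MonoidAlgebra k G) (t : G) : Prop where
  bijOn : Set.BijOn f (translateSpan K e) (translateSpan K' e')
  smul_map : ∀ x ∈ translateSpan K e, ∀ h,
    x.coeff h • f (of k G h * e) = (f x).coeff (t * h) • (of k G (t * h) * e')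

lemma IsColinearIso.exists_weight {f : MonoidAlgebra k G →ₗ[k] MonoidAlgebra k G} {t : G}
    (hf : IsColinearIso f K K' e e' t) (he0 : e ≠ 0) (he : ∀ h ∉ K, e.coeff h = 0) (h : K) :
    ∃ c : k, c ≠ 0 ∧ f (of k G h * e) = c • (of k G (t * h) * e') := by
  obtain ⟨x, hx, hxh⟩ := exists_mem_translateSpan_coeff_ne_zero he0 he h.2
  have hx' := hf.smul_map x hx h
  have heq : f (of k G h * e)
      = ((x.coeff h)⁻¹ * (f x).coeff (t * h)) • (of k G (t * h) * e') := by
    rw [mul_smul, ← hx', inv_smul_smul₀ hxh]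
  refine ⟨_, fun H => ?_, heq⟩
  rw [H, zero_smul, ← map_zero f] at heq
  exact of_mul_ne_zero he0 h (hf.bijOn.injOn (of_mul_mem_translateSpan e h.2) (zero_mem _) heq)

lemma IsColinearIso.mul_mem {f : MonoidAlgebra k G →ₗ[k] MonoidAlgebra k G} {t : G}
    (hf : IsColinearIso f K K' e e' t) (he0 : e ≠ 0) (he : ∀ h ∉ K, e.coeff h = 0)
    (he0' : e' ≠ 0) (he' : ∀ h ∉ K', e'.coeff h = 0) {h : G} (hh : h ∈ K) : t * h ∈ K' := by
  obtain ⟨c, hc, hfc⟩ := hf.exists_weight he0 he ⟨h, hh⟩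
  obtain ⟨x, hx, hx1⟩ := exists_mem_translateSpan_coeff_ne_zero he0 he hh
  by_contra H
  have h1 := hf.smul_map x hx h
  rw [coeff_eq_zero_of_mem_translateSpan he' (hf.bijOn.mapsTo hx) H, zero_smul, hfc] at h1
  exact smul_ne_zero hx1 (smul_ne_zero hc (of_mul_ne_zero he0' _)) h1

lemma IsColinearIso.inv_mul_mem {f : MonoidAlgebra k G →ₗ[k] MonoidAlgebra k G} {t : G}
    (hf : IsColinearIso f K K' e e' t) (he : ∀ h ∉ K, e.coeff h = 0)
    (he0' : e' ≠ 0) (he' : ∀ h ∉ K', e'.coeff h = 0) {h : G} (hh : h ∈ K') : t⁻¹ * h ∈ K := by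
  obtain ⟨y, hy, hyh⟩ := exists_mem_translateSpan_coeff_ne_zero he0' he' hh
  obtain ⟨x, hx, rfl⟩ := hf.bijOn.surjOn hy
  by_contra H
  have h1 := hf.smul_map x hx (t⁻¹ * h)
  rw [coeff_eq_zero_of_mem_translateSpan he hx H, zero_smul, mul_inv_cancel_left] at h1
  exact smul_ne_zero hyh (of_mul_ne_zero he0' _) h1.symm

lemma IsColinearIso.exists_character {f : MonoidAlgebra k G →ₗ[k] MonoidAlgebra k G} {t : G}
    (hf : IsColinearIso f K K' e e' t) (he0 : e ≠ 0) (he : ∀ h ∉ K, e.coeff h = 0)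
    (he0' : e' ≠ 0) (hK : K = Subgroup.closure (e.coeff.support : Set G)) :
    ∃ ν : K →* kˣ, ∀ (h : G) (hh : h ∈ K), e'.coeff h = ((ν ⟨h, hh⟩ : kˣ) : k) * e.coeff h := by
  choose c hc0 hc using hf.exists_weight he0 he
  refine exists_character_of_weights hK c hc0 fun u m => ?_
  have h1 := hf.smul_map _ (of_mul_mem_translateSpan e u.2) ((u * m : K) : G)
  rw [hc, hc, smul_smul] at h1
  have h2 := smul_left_injective k (of_mul_ne_zero he0' _) h1
  rw [coeff_smul_apply, coeff_of_mul, coeff_of_mul] at h2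
  have h3 : (t * (u : G))⁻¹ * (t * ((u * m : K) : G)) = m := by simp [mul_assoc]
  have h4 : (u : G)⁻¹ * ((u * m : K) : G) = m := by simp
  rw [h3, h4, smul_eq_mul] at h2
  linear_combination h2

lemma weightedTranslate_of_mul [Fintype G] {c : G → k} (he : ∀ h ∉ K, e.coeff h = 0)
    (he' : ∀ h ∉ K, e'.coeff h = 0) (hmul : ∀ u ∈ K, ∀ m ∈ K, c (u * m) = c u * c m)
    (hc : ∀ h ∈ K, e'.coeff h = c h * e.coeff h) (t : G) {h : G} (hh : h ∈ K) :
    weightedTranslate t c (of k G h * e) = c h • (of k G (t * h) * e') := by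
  refine MonoidAlgebra.ext (Finsupp.ext fun u => ?_)
  rw [coeff_weightedTranslate, coeff_smul_apply, coeff_of_mul, coeff_of_mul, mul_inv_rev,
    mul_assoc h⁻¹, smul_eq_mul]
  by_cases hu : h⁻¹ * (t⁻¹ * u) ∈ K
  · rw [hc _ hu, ← mul_assoc (c h), ← hmul h hh _ hu, mul_inv_cancel_left]
  · rw [he _ hu, he' _ hu, mul_zero, mul_zero]

lemma isColinearIso_weightedTranslate [Fintype G] {c : G → k} (he : ∀ h ∉ K, e.coeff h = 0)
    (he' : ∀ h ∉ K, e'.coeff h = 0) (hmul : ∀ u ∈ K, ∀ m ∈ K, c (u * m) = c u * c m)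
    (hc0 : ∀ h ∈ K, c h ≠ 0) (hc : ∀ h ∈ K, e'.coeff h = c h * e.coeff h) {t : G} (ht : t ∈ K) :
    IsColinearIso (weightedTranslate t c) K K e e' t where
  bijOn := by
    refine ⟨?_, fun x hx y hy hxy => ?_, ?_⟩
    · change translateSpan K e ≤ (translateSpan K e').comap (weightedTranslate t c)
      refine Submodule.span_le.2 ?_
      rintro _ ⟨h, hh, rfl⟩
      rw [SetLike.mem_coe, Submodule.mem_comap, weightedTranslate_of_mul he he' hmul hc t hh]
      exact Submodule.smul_mem _ _ (of_mul_mem_translateSpan e' (K.mul_mem ht hh))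
    · refine MonoidAlgebra.ext (Finsupp.ext fun h => ?_)
      by_cases hh : h ∈ K
      · have := congrArg (fun z => z.coeff (t * h)) hxy
        simp only [coeff_weightedTranslate, inv_mul_cancel_left] at this
        exact mul_left_cancel₀ (hc0 h hh) this
      · rw [coeff_eq_zero_of_mem_translateSpan he hx hh,
          coeff_eq_zero_of_mem_translateSpan he hy hh]
    · change translateSpan K e' ≤ (translateSpan K e).map (weightedTranslate t c)
      refine Submodule.span_le.2 ?_
      rintro _ ⟨h, hh, rfl⟩
      have hth := K.mul_mem (K.inv_mem ht) hh
      refine ⟨(c (t⁻¹ * h))⁻¹ • (of k G (t⁻¹ * h) * e),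
        Submodule.smul_mem _ _ (of_mul_mem_translateSpan e hth), ?_⟩
      rw [map_smul, weightedTranslate_of_mul he he' hmul hc t hth, inv_smul_smul₀ (hc0 _ hth),
        mul_inv_cancel_left]
  smul_map x hx h := by
    rw [coeff_weightedTranslate, inv_mul_cancel_left]
    by_cases hh : h ∈ K
    · rw [weightedTranslate_of_mul he he' hmul hc t hh, smul_smul, mul_comm]
    · rw [coeff_eq_zero_of_mem_translateSpan he hx hh, mul_zero, zero_smul, zero_smul]

end Classification

end MonoidAlgebra

/-- classification of isomorphisms between the simple partial `kG`-comodules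
`(I, ρ)` and `(I', ρ')` built from subcentral idempotents `e, e'` and shifts `g, g'`:
an isomorphism of partial comodules exists iff `K = K'`, `g·K = g'·K'`, and some
multiplicative character `ν` of `K` transforms `e` into `e'` via `h ↦ ν(h)·h`. -/
theorem stmt18 (k G : Type*) [Field k] [Group G] [Fintype G]
    (hchar : (Fintype.card G : k) ≠ 0)
    (e e' : MonoidAlgebra k G)
    (he0 : e ≠ 0) (hidem : e * e = e)
    (hsub : (e ⊗ₜ[k] (1 : MonoidAlgebra k G)) * gaComul k G e
      = gaComul k G e * (e ⊗ₜ[k] (1 : MonoidAlgebra k G)))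
    (he0' : e' ≠ 0) (hidem' : e' * e' = e')
    (hsub' : (e' ⊗ₜ[k] (1 : MonoidAlgebra k G)) * gaComul k G e'
      = gaComul k G e' * (e' ⊗ₜ[k] (1 : MonoidAlgebra k G)))
    (K K' : Subgroup G)
    (hK : K = Subgroup.closure (e.coeff.support : Set G))
    (hK' : K' = Subgroup.closure (e'.coeff.support : Set G))
    (I I' : Submodule k (MonoidAlgebra k G))
    (hI : I = Submodule.span k
      {x : MonoidAlgebra k G | ∃ h ∈ K, x = MonoidAlgebra.of k G h * e})
    (hI' : I' = Submodule.span k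
      {x : MonoidAlgebra k G | ∃ h ∈ K', x = MonoidAlgebra.of k G h * e'})
    (g g' : G) :
    -- there is an isomorphism of partial comodules `(I, ρ) ≅ (I', ρ')` ...
    (∃ f : MonoidAlgebra k G →ₗ[k] MonoidAlgebra k G,
      (∀ x ∈ I, f x ∈ I') ∧ Set.BijOn f I I' ∧
      (∀ x ∈ I,
        TensorProduct.map f LinearMap.id
            (((1 : MonoidAlgebra k G) ⊗ₜ[k] MonoidAlgebra.of k G g)
              * (gaComul k G x * (e ⊗ₜ[k] (1 : MonoidAlgebra k G))))
          = ((1 : MonoidAlgebra k G) ⊗ₜ[k] MonoidAlgebra.of k G g')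
              * (gaComul k G (f x) * (e' ⊗ₜ[k] (1 : MonoidAlgebra k G)))))
    -- ... if and only if `K = K'`, `g·K = g'·K'`, and a character `ν` of `K` maps `e` to `e'`
    ↔ (K = K'
      ∧ (fun x => g * x) '' (K : Set G) = (fun x => g' * x) '' (K' : Set G)
      ∧ ∃ ν : K →* kˣ, ∀ (h : G) (hh : h ∈ K), e'.coeff h = ((ν ⟨h, hh⟩ : kˣ) : k) * e.coeff h) := by
  classical
  have he : ∀ h ∉ K, e.coeff h = 0 := fun h hh => by
    by_contra H
    exact hh (hK ▸ Subgroup.subset_closure (by simpa using H))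
  have he' : ∀ h ∉ K', e'.coeff h = 0 := fun h hh => by
    by_contra H
    exact hh (hK' ▸ Subgroup.subset_closure (by simpa using H))
  change I = MonoidAlgebra.translateSpan K e at hI
  change I' = MonoidAlgebra.translateSpan K' e' at hI'
  subst hI hI'
  simp only [MonoidAlgebra.map_coaction_eq_iff]
  constructor
  · rintro ⟨f, -, hbij, hsmul⟩
    have hf : MonoidAlgebra.IsColinearIso f K K' e e' (g'⁻¹ * g) := ⟨hbij, hsmul⟩
    have ht' : g'⁻¹ * g ∈ K' := by simpa using hf.mul_mem he0 he he0' he' K.one_mem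
    have ht : g'⁻¹ * g ∈ K := by
      simpa using K.inv_mem (hf.inv_mul_mem he he0' he' K'.one_mem)
    have hKK : K = K' := by
      ext h
      exact ⟨fun hh => (K'.mul_mem_cancel_left ht').1 (hf.mul_mem he0 he he0' he' hh),
        fun hh => (K.mul_mem_cancel_left (K.inv_mem ht)).1 (hf.inv_mul_mem he he0' he' hh)⟩
    refine ⟨hKK, ?_, hf.exists_character he0 he he0' hK⟩
    rw [← hKK]
    exact ((leftCoset_eq_iff K).2 ht).symm
  · rintro ⟨rfl, hcoset, ν, hν⟩
    have ht : g'⁻¹ * g ∈ K := (leftCoset_eq_iff K).1 hcoset.symm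
    have hf := MonoidAlgebra.isColinearIso_weightedTranslate
      (c := fun h => if hh : h ∈ K then ((ν ⟨h, hh⟩ : kˣ) : k) else 0) he he'
      (fun u hu m hm => by
        rw [dif_pos hu, dif_pos hm, dif_pos (K.mul_mem hu hm), ← Units.val_mul, ← map_mul]; rfl)
      (fun h hh => by rw [dif_pos hh]; exact Units.ne_zero _)
      (fun h hh => by rw [dif_pos hh]; exact hν h hh) ht
    exact ⟨_, fun x hx => hf.bijOn.mapsTo hx, hf.bijOn, hf.smul_map⟩
end
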